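/- arXiv:1608.02895 — 3 statements merged into one kernel-verified Lean document; each statement's English description precedes it below -/
import Mathlib

section
/- Let d ≥ 1 and ℓ ≥ 1 be integers, and let R = ∏_{i=1}^d [x_i, y_i) with reals 0 ≤ x_i ≤ y_i ≤ 1 be a rectangle contained in [0,1)^d. Then there exist sets R⁻ and R⁺, each of which is either empty or a product ∏_{i=1}^d [a_i·2^{-ℓ}, b_i·2^{-ℓ}) with integers 0 ≤ a_i ≤ b_i ≤ 2^ℓ, such that R⁻ ⊆ R ⊆ R⁺ and vol(R⁺) - vol(R⁻) ≤ 2d·2^{-ℓ}, where vol denotes d-dimensional Lebesgue measure. -/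
open MeasureTheory

/-!
Rounding the endpoints of an interval outwards, respectively inwards, to multiples of `N⁻¹` gives
an outer and an inner lattice interval whose lengths differ by at most `2 * N⁻¹`: each of the two
endpoints moves by at most one lattice step. As all the lengths are at most `1`, replacing the
outer sides of a box by the inner ones, one coordinate at a time, changes the volume by at most
`2 * N⁻¹` for each coordinate.
-/

lemma prod_le_prod_add_sum_of_le_one {ι R : Type*} [CommSemiring R] [LinearOrder R]
    [IsOrderedRing R] [CanonicallyOrderedAdd R] {s : Finset ι} {p q e : ι → R}
    (hp : ∀ i ∈ s, p i ≤ 1) (hpq : ∀ i ∈ s, p i ≤ q i + e i) :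
    ∏ i ∈ s, p i ≤ ∏ i ∈ s, q i + ∑ i ∈ s, e i := by
  classical
  induction s using Finset.induction_on with
  | empty => simp
  | insert j s hj ih =>
    simp only [Finset.forall_mem_insert] at hp hpq
    rw [Finset.prod_insert hj, Finset.prod_insert hj, Finset.sum_insert hj]
    have hprod : ∏ i ∈ s, p i ≤ ∏ i ∈ s, q i + ∑ i ∈ s, e i := ih hp.2 hpq.2
    rcases le_total (p j) (q j) with hle | hle
    · calc p j * ∏ i ∈ s, p i
          ≤ p j * (∏ i ∈ s, q i + ∑ i ∈ s, e i) := by gcongr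
        _ = p j * ∏ i ∈ s, q i + p j * ∑ i ∈ s, e i := mul_add ..
        _ ≤ q j * ∏ i ∈ s, q i + ∑ i ∈ s, e i :=
            add_le_add (by gcongr) (mul_le_of_le_one_left' hp.1)
        _ ≤ q j * ∏ i ∈ s, q i + (e j + ∑ i ∈ s, e i) := by gcongr; exact le_add_self
    · calc p j * ∏ i ∈ s, p i
          ≤ (q j + e j) * ∏ i ∈ s, p i := by gcongr; exact hpq.1
        _ = q j * ∏ i ∈ s, p i + e j * ∏ i ∈ s, p i := add_mul ..
        _ ≤ q j * (∏ i ∈ s, q i + ∑ i ∈ s, e i) + e j :=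
            add_le_add (by gcongr) (mul_le_of_le_one_right' (Finset.prod_le_one' hp.2))
        _ = q j * ∏ i ∈ s, q i + (e j + q j * ∑ i ∈ s, e i) := by ring
        _ ≤ q j * ∏ i ∈ s, q i + (e j + ∑ i ∈ s, e i) := by
            gcongr; exact mul_le_of_le_one_left' (hle.trans hp.1)

lemma measure_univ_pi_le_add_sum {ι : Type*} [Fintype ι] {α : ι → Type*}
    [∀ i, MeasurableSpace (α i)] (μ : ∀ i, Measure (α i)) [∀ i, SigmaFinite (μ i)]
    {s t : ∀ i, Set (α i)} {e : ι → ENNReal} (ht : ∀ i, μ i (t i) ≤ 1)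
    (hst : ∀ i, μ i (t i) ≤ μ i (s i) + e i) :
    Measure.pi μ (Set.univ.pi t) ≤ Measure.pi μ (Set.univ.pi s) + ∑ i, e i := by
  rw [Measure.pi_pi, Measure.pi_pi]
  exact prod_le_prod_add_sum_of_le_one (fun i _ => ht i) fun i _ => hst i

section Rounding

variable {K : Type*} [Ring K] [LinearOrder K] [FloorRing K]

lemma ceil_sub_floor_le_max_sub_ceil_add_two (u v : K) :
    ⌈v⌉ - ⌊u⌋ ≤ max ⌈u⌉ ⌊v⌋ - ⌈u⌉ + 2 := by
  have hu : ⌈u⌉ ≤ ⌊u⌋ + 1 := Int.ceil_le_floor_add_one u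
  have hv : ⌈v⌉ ≤ ⌊v⌋ + 1 := Int.ceil_le_floor_add_one v
  omega

variable [IsOrderedRing K]

lemma lattice_bounds_floor_ceil {N : ℕ} {x y : K} (h : 0 ≤ x ∧ x ≤ y ∧ y ≤ 1) :
    0 ≤ ⌊x * N⌋ ∧ ⌊x * N⌋ ≤ ⌈y * N⌉ ∧ ⌈y * N⌉ ≤ N := by
  obtain ⟨hx, hxy, hy⟩ := h
  have hxyN : x * N ≤ y * N := by gcongr
  have hyN : y * N ≤ N := mul_le_of_le_one_left N.cast_nonneg hy
  exact ⟨Int.floor_nonneg.2 (by positivity), (Int.floor_mono hxyN).trans (Int.floor_le_ceil _),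
    Int.ceil_le.2 (by exact_mod_cast hyN)⟩

lemma lattice_bounds_ceil_max_floor {N : ℕ} {x y : K} (h : 0 ≤ x ∧ x ≤ y ∧ y ≤ 1) :
    0 ≤ ⌈x * N⌉ ∧ ⌈x * N⌉ ≤ max ⌈x * N⌉ ⌊y * N⌋ ∧ max ⌈x * N⌉ ⌊y * N⌋ ≤ N := by
  have hfloor : 0 ≤ ⌊x * N⌋ := (lattice_bounds_floor_ceil h).1
  have hxy : ⌈x * N⌉ ≤ ⌈y * N⌉ := Int.ceil_mono (by gcongr; exact h.2.1)
  have hy : ⌈y * N⌉ ≤ N := (lattice_bounds_floor_ceil h).2.2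
  exact ⟨hfloor.trans (Int.floor_le_ceil _), le_max_left _ _,
    max_le (hxy.trans hy) ((Int.floor_le_ceil _).trans hy)⟩

end Rounding

section LatticeIntervals

variable {K : Type*} [Field K] [LinearOrder K] [IsStrictOrderedRing K] [FloorRing K]

lemma floor_mul_mul_inv_le {c : K} (hc : 0 < c) (x : K) : (⌊x * c⌋ : K) * c⁻¹ ≤ x :=
  (mul_inv_le_iff₀ hc).2 (Int.floor_le _)

lemma le_ceil_mul_mul_inv {c : K} (hc : 0 < c) (x : K) : x ≤ (⌈x * c⌉ : K) * c⁻¹ :=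
  (le_mul_inv_iff₀ hc).2 (Int.le_ceil _)

lemma Ico_subset_Ico_floor_ceil {c : K} (hc : 0 < c) (x y : K) :
    Set.Ico x y ⊆ Set.Ico ((⌊x * c⌋ : K) * c⁻¹) ((⌈y * c⌉ : K) * c⁻¹) :=
  Set.Ico_subset_Ico (floor_mul_mul_inv_le hc x) (le_ceil_mul_mul_inv hc y)

-- The maximum keeps the endpoints in order when `[x, y]` contains no lattice point.
lemma Ico_ceil_max_floor_subset_Ico {c : K} (hc : 0 < c) (x y : K) :
    Set.Ico ((⌈x * c⌉ : K) * c⁻¹) (((max ⌈x * c⌉ ⌊y * c⌋ : ℤ) : K) * c⁻¹) ⊆ Set.Ico x y := by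
  rcases le_total ⌈x * c⌉ ⌊y * c⌋ with hle | hle
  · rw [max_eq_right hle]
    exact Set.Ico_subset_Ico (le_ceil_mul_mul_inv hc x) (floor_mul_mul_inv_le hc y)
  · rw [max_eq_left hle, Set.Ico_self]
    exact Set.empty_subset _

end LatticeIntervals

lemma volume_Ico_mul_inv_le_one {N : ℕ} {a b : ℤ} (ha : 0 ≤ a) (hb : b ≤ N) :
    volume (Set.Ico ((a : ℝ) * (N : ℝ)⁻¹) (b * (N : ℝ)⁻¹)) ≤ 1 := by
  have ha' : (0 : ℝ) ≤ a * (N : ℝ)⁻¹ := by positivity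
  have hb' : (b : ℝ) * (N : ℝ)⁻¹ ≤ 1 :=
    mul_inv_le_one_of_le₀ (by exact_mod_cast hb) (Nat.cast_nonneg N)
  calc volume (Set.Ico ((a : ℝ) * (N : ℝ)⁻¹) (b * (N : ℝ)⁻¹))
      ≤ volume (Set.Ico (0 : ℝ) 1) := measure_mono (Set.Ico_subset_Ico ha' hb')
    _ = 1 := by simp

lemma volume_Ico_mul_le_add_of_sub_le {a b a' b' k : ℤ} {δ : ℝ} (hδ : 0 ≤ δ)
    (h : b' - a' ≤ b - a + k) :
    volume (Set.Ico (a' * δ) (b' * δ)) ≤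
      volume (Set.Ico (a * δ) (b * δ)) + ENNReal.ofReal (k * δ) := by
  have h' : (b' : ℝ) - a' ≤ b - a + k := by exact_mod_cast h
  simp only [Real.volume_Ico, ← sub_mul]
  calc ENNReal.ofReal ((b' - a') * δ)
      ≤ ENNReal.ofReal ((b - a) * δ + k * δ) := by
        rw [← add_mul]; gcongr
    _ ≤ ENNReal.ofReal ((b - a) * δ) + ENNReal.ofReal (k * δ) := ENNReal.ofReal_add_le

/-- The lattice rectangles of resolution `N⁻¹` in the unit cube `[0,1)^ι`. Corners may coincide in
a coordinate, so the empty set is one of them as soon as `ι` is nonempty. -/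
def IsLatticeBox {ι : Type*} (N : ℕ) (R : Set (ι → ℝ)) : Prop :=
  ∃ a b : ι → ℤ, (∀ i, 0 ≤ a i ∧ a i ≤ b i ∧ b i ≤ N) ∧
    R = Set.univ.pi fun i => Set.Ico ((a i : ℝ) * (N : ℝ)⁻¹) (b i * (N : ℝ)⁻¹)

theorem stmt_9_general {ι : Type*} [Fintype ι] {N : ℕ} (hN : 0 < N) (x y : ι → ℝ)
    (h : ∀ i, 0 ≤ x i ∧ x i ≤ y i ∧ y i ≤ 1) :
    ∃ Rm Rp : Set (ι → ℝ), IsLatticeBox N Rm ∧ IsLatticeBox N Rp ∧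
      Rm ⊆ (Set.univ.pi fun i => Set.Ico (x i) (y i)) ∧
      (Set.univ.pi fun i => Set.Ico (x i) (y i)) ⊆ Rp ∧
      volume Rp ≤ volume Rm + ENNReal.ofReal (2 * Fintype.card ι * (N : ℝ)⁻¹) := by
  have hN' : (0 : ℝ) < N := by exact_mod_cast hN
  refine ⟨_, _, ⟨_, _, fun i => lattice_bounds_ceil_max_floor (h i), rfl⟩,
    ⟨_, _, fun i => lattice_bounds_floor_ceil (h i), rfl⟩,
    Set.pi_mono fun i _ => Ico_ceil_max_floor_subset_Ico hN' (x i) (y i),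
    Set.pi_mono fun i _ => Ico_subset_Ico_floor_ceil hN' (x i) (y i), ?_⟩
  have herror : ENNReal.ofReal (2 * Fintype.card ι * (N : ℝ)⁻¹) =
      ∑ _i : ι, ENNReal.ofReal ((2 : ℤ) * (N : ℝ)⁻¹) := by
    rw [← ENNReal.ofReal_sum_of_nonneg fun _ _ => by positivity]
    simp only [Finset.sum_const, Finset.card_univ, nsmul_eq_mul, Int.cast_ofNat]
    congr 1
    ring
  rw [herror, volume_pi]
  exact measure_univ_pi_le_add_sum _
    (fun i => volume_Ico_mul_inv_le_one (lattice_bounds_floor_ceil (h i)).1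
      (lattice_bounds_floor_ceil (h i)).2.2)
    fun i => volume_Ico_mul_le_add_of_sub_le (by positivity)
      (ceil_sub_floor_le_max_sub_ceil_add_two _ _)

/-- inner and outer lattice-rectangle approximations of an arbitrary rectangle
in `[0,1)^d`, with volume difference at most `2d·2^{-ℓ}`. -/
theorem stmt_9 (d ℓ : ℕ) (hd : 1 ≤ d) (hℓ : 1 ≤ ℓ) (x y : Fin d → ℝ)
    (h : ∀ i, 0 ≤ x i ∧ x i ≤ y i ∧ y i ≤ 1) :
    ∃ Rm Rp : Set (Fin d → ℝ),
      (Rm = ∅ ∨ ∃ a b : Fin d → ℤ, (∀ i, 0 ≤ a i ∧ a i ≤ b i ∧ b i ≤ 2^ℓ) ∧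
        Rm = Set.univ.pi fun i =>
          Set.Ico ((a i : ℝ) * (2:ℝ)^(-(ℓ : ℤ))) ((b i : ℝ) * (2:ℝ)^(-(ℓ : ℤ)))) ∧
      (Rp = ∅ ∨ ∃ a b : Fin d → ℤ, (∀ i, 0 ≤ a i ∧ a i ≤ b i ∧ b i ≤ 2^ℓ) ∧
        Rp = Set.univ.pi fun i =>
          Set.Ico ((a i : ℝ) * (2:ℝ)^(-(ℓ : ℤ))) ((b i : ℝ) * (2:ℝ)^(-(ℓ : ℤ)))) ∧
      Rm ⊆ (Set.univ.pi fun i => Set.Ico (x i) (y i)) ∧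
      (Set.univ.pi fun i => Set.Ico (x i) (y i)) ⊆ Rp ∧
      volume Rp ≤ volume Rm + ENNReal.ofReal (2 * d * (2:ℝ)^(-(ℓ : ℤ))) := by
  obtain ⟨Rm, Rp, hRm, hRp, hR⟩ := stmt_9_general (N := 2 ^ ℓ) (by positivity) x y h
  exact ⟨Rm, Rp, .inr (by simpa [IsLatticeBox] using hRm), .inr (by simpa [IsLatticeBox] using hRp),
    by simpa using hR⟩
end

section
/- For every real θ with 0 < θ < 1, one has cosh(θ/2) - (θ/3)·sinh(θ/2) ≤ exp(-θ²/24). -/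
/-!
Since `cosh x - 1 = 2 sinh² (x / 2)` and `sinh y ≤ y cosh y` for `0 ≤ y`, the duplication formula
`sinh x = 2 sinh (x / 2) cosh (x / 2)` gives `cosh x - (x / 2) sinh x ≤ 1`. Any further multiple of
`x sinh x` that is subtracted lowers the left-hand side by at least the same multiple of `x ^ 2`, so
`cosh x - c x sinh x ≤ 1 - (c - 1 / 2) x ^ 2 ≤ exp (-(c - 1 / 2) x ^ 2)` whenever `1 / 2 ≤ c`. The
theorem is the case `c = 2 / 3`, `x = θ / 2`.
-/

open Real

theorem sq_le_mul_sinh (x : ℝ) : x ^ 2 ≤ x * sinh x := by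
  rw [sq]
  rcases le_total 0 x with hx | hx
  · exact mul_le_mul_of_nonneg_left (self_le_sinh_iff.2 hx) hx
  · exact mul_le_mul_of_nonpos_left (sinh_le_self_iff.2 hx) hx

theorem monotone_mul_cosh_sub_sinh : Monotone fun x : ℝ => x * cosh x - sinh x := by
  have hderiv (x : ℝ) : HasDerivAt (fun y => y * cosh y - sinh y) (x * sinh x) x := by
    refine (((hasDerivAt_id' x).mul (hasDerivAt_cosh x)).sub (hasDerivAt_sinh x)).congr_deriv ?_
    ring
  exact monotone_of_hasDerivAt_nonneg hderiv fun x => (sq_nonneg x).trans (sq_le_mul_sinh x)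

theorem sinh_le_mul_cosh {x : ℝ} (hx : 0 ≤ x) : sinh x ≤ x * cosh x := by
  simpa using monotone_mul_cosh_sub_sinh hx

theorem mul_cosh_le_sinh {x : ℝ} (hx : x ≤ 0) : x * cosh x ≤ sinh x := by
  simpa using monotone_mul_cosh_sub_sinh hx

theorem sinh_sq_le_mul_sinh_mul_cosh (x : ℝ) : sinh x ^ 2 ≤ x * sinh x * cosh x := by
  rw [sq, mul_right_comm]
  rcases le_total 0 x with hx | hx
  · exact mul_le_mul_of_nonneg_right (sinh_le_mul_cosh hx) (sinh_nonneg_iff.2 hx)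
  · exact mul_le_mul_of_nonpos_right (mul_cosh_le_sinh hx) (sinh_nonpos_iff.2 hx)

theorem cosh_le_one_add_half_mul_sinh (x : ℝ) : cosh x ≤ 1 + x / 2 * sinh x := by
  obtain ⟨y, rfl⟩ : ∃ y, x = 2 * y := ⟨x / 2, by ring⟩
  calc
    cosh (2 * y) = 1 + 2 * sinh y ^ 2 := by rw [cosh_two_mul, cosh_sq]; ring
    _ ≤ 1 + 2 * (y * sinh y * cosh y) := by gcongr; exact sinh_sq_le_mul_sinh_mul_cosh y
    _ = 1 + 2 * y / 2 * sinh (2 * y) := by rw [sinh_two_mul]; ring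

theorem cosh_sub_mul_sinh_le_exp {c : ℝ} (hc : 1 / 2 ≤ c) (x : ℝ) :
    cosh x - c * x * sinh x ≤ exp (-(c - 1 / 2) * x ^ 2) := by
  have hexcess : (c - 1 / 2) * x ^ 2 ≤ (c - 1 / 2) * (x * sinh x) :=
    mul_le_mul_of_nonneg_left (sq_le_mul_sinh x) (sub_nonneg.2 hc)
  calc
    cosh x - c * x * sinh x ≤ 1 + x / 2 * sinh x - c * x * sinh x := by
      gcongr
      exact cosh_le_one_add_half_mul_sinh x
    _ = 1 - (c - 1 / 2) * (x * sinh x) := by ring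
    _ ≤ -(c - 1 / 2) * x ^ 2 + 1 := by linarith
    _ ≤ exp (-(c - 1 / 2) * x ^ 2) := add_one_le_exp _

theorem stmt_12_general (θ : ℝ) :
    cosh (θ / 2) - (θ / 3) * sinh (θ / 2) ≤ exp (-θ ^ 2 / 24) := by
  convert cosh_sub_mul_sinh_le_exp (c := 2 / 3) (by norm_num) (θ / 2) using 3 <;> ring

theorem stmt_12 (θ : ℝ) (hθ0 : 0 < θ) (hθ1 : θ < 1) :
    Real.cosh (θ/2) - (θ/3) * Real.sinh (θ/2) ≤ Real.exp (-θ^2/24) :=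
  stmt_12_general θ
end

section
/- Let (Ω, F, P) be a probability space with a filtration (F_n)_{n ≥ 0}, let θ ∈ (0,1), κ ∈ (0, 1/3], and s ≥ 0. Let (D_n)_{n ≥ 0} be a sequence of integer-valued random variables adapted to (F_n) such that for every n > s, almost surely: (i) |D_n - D_{n-1}| ≤ 1; (ii) κ ≤ P(D_n ≠ D_{n-1} | F_{n-1}) ≤ 3κ; and (iii) on the event {D_{n-1} ≠ 0}, P(|D_n| = |D_{n-1}| + 1 | F_{n-1}) ≤ (1/2 - θ/6)·P(D_n ≠ D_{n-1} | F_{n-1}). If E(exp(θ·|D_s|/2)) ≤ 150/θ², then E(exp(θ·|D_n|/2)) ≤ 150/θ² for all n ≥ s. -/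
open MeasureTheory

/-!
Write `a = θ / 2`. An outward move multiplies `exp (a * |D|)` by `exp a`, an inward one by
`exp (-a)`. If a move is outward with conditional probability at most `p < 1 / 2`, then off the
origin the conditional expectation contracts by `1 - κ * δ`, where `cosh a - 1 ≤ a / 2 * sinh a`
gives `δ = (1 - 2 * p - a / 2) * sinh a`. At the origin it grows by at most `2 * K * sinh a`, where
`K` bounds the probability of a move. The common factor `sinh a` cancels from the fixed point of the
resulting affine recursion, which for `p = 1 / 2 - θ / 6` and `K = 3 * κ` is `1 + 72 / θ`.
-/

/-- The indicator of a move from `x` to `y ≠ x`; its conditional expectation is the probability of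
moving. -/
def moveIndicator (x y : ℤ) : ℝ := if y ≠ x then 1 else 0

/-- The indicator that the step from `x` to `y` leads one unit further from the origin. -/
def outwardIndicator (x y : ℤ) : ℝ := if |y| = |x| + 1 then 1 else 0

/-- The Lyapunov function `k ↦ exp (a * |k|)`, whose expectation is the exponential moment. -/
noncomputable def expAbs (a : ℝ) (k : ℤ) : ℝ := Real.exp (a * ((|k| : ℤ) : ℝ))

/-- The mean factor by which a step multiplies `expAbs a` if it is a move with probability `v` and
an outward move with probability `u`. It is affine in `(u, v)`, hence commutes with conditional
expectation; for indicators `u` and `v` it is the factor of the step itself. -/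
noncomputable def meanFactor (a u v : ℝ) : ℝ :=
  1 + 2 * Real.sinh a * u + (Real.exp (-a) - 1) * v

/-- The rate, per unit of moving probability, at which the mean of `expAbs a` contracts off the
origin when a move is outward with probability at most `p`. -/
noncomputable def driftRate (a p : ℝ) : ℝ := (1 - 2 * p - a / 2) * Real.sinh a

/-- A step from `x` to `y` of a lazy nearest-neighbour walk on `ℤ`: given `m`, it moves with
probability between `κ` and `K`, and off the origin a fraction at most `p` of that probability is
for moves away from the origin. -/
structure IsInwardBiasedStep {Ω : Type*} {m0 : MeasurableSpace Ω} (μ : Measure Ω)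
    (m : MeasurableSpace Ω) (κ K p : ℝ) (x y : Ω → ℤ) : Prop where
  abs_sub_le_one : ∀ᵐ ω ∂μ, |y ω - x ω| ≤ 1
  condExp_move_mem : ∀ᵐ ω ∂μ, (μ[fun ω' => moveIndicator (x ω') (y ω') | m]) ω ∈ Set.Icc κ K
  condExp_outward_le : ∀ᵐ ω ∂μ, x ω ≠ 0 →
    (μ[fun ω' => outwardIndicator (x ω') (y ω') | m]) ω ≤
      p * (μ[fun ω' => moveIndicator (x ω') (y ω') | m]) ω

section DriftRate

variable {a p : ℝ}

lemma sinh_le_self_mul_cosh (ha : 0 ≤ a) : Real.sinh a ≤ a * Real.cosh a := by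
  have hderiv : ∀ t ∈ interior (Set.Icc 0 a), deriv Real.sinh t ≤ Real.cosh a := by
    intro t ht
    rw [interior_Icc] at ht
    rw [Real.deriv_sinh, Real.cosh_le_cosh, abs_of_pos ht.1, abs_of_nonneg ha]
    exact ht.2.le
  have := (convex_Icc 0 a).image_sub_le_mul_sub_of_deriv_le Real.continuous_sinh.continuousOn
    Real.differentiable_sinh.differentiableOn hderiv 0 (Set.left_mem_Icc.mpr ha)
    a (Set.right_mem_Icc.mpr ha) ha
  simpa [mul_comm] using this

lemma cosh_sub_one_le_half_mul_sinh (ha : 0 ≤ a) : Real.cosh a - 1 ≤ a / 2 * Real.sinh a := by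
  obtain ⟨b, rfl⟩ : ∃ b, a = 2 * b := ⟨a / 2, by ring⟩
  have hb : 0 ≤ b := by linarith
  calc Real.cosh (2 * b) - 1 = 2 * Real.sinh b * Real.sinh b := by
        rw [Real.cosh_two_mul, Real.cosh_sq]; ring
    _ ≤ 2 * Real.sinh b * (b * Real.cosh b) :=
        mul_le_mul_of_nonneg_left (sinh_le_self_mul_cosh hb)
          (mul_nonneg zero_le_two (Real.sinh_nonneg_iff.mpr hb))
    _ = 2 * b / 2 * Real.sinh (2 * b) := by rw [Real.sinh_two_mul]; ring

lemma two_sinh_mul_add_exp_neg_sub_one_le (ha : 0 ≤ a) :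
    2 * Real.sinh a * p + (Real.exp (-a) - 1) ≤ -driftRate a p := by
  have hexp : Real.exp (-a) = Real.cosh a - Real.sinh a := (Real.cosh_sub_sinh a).symm
  rw [hexp, driftRate]
  linarith [cosh_sub_one_le_half_mul_sinh ha]

lemma driftRate_le_one (ha : 0 ≤ a) (hp : 0 ≤ p) : driftRate a p ≤ 1 := by
  have hsinh : 0 ≤ 2 * Real.sinh a * p :=
    mul_nonneg (mul_nonneg zero_le_two (Real.sinh_nonneg_iff.mpr ha)) hp
  linarith [two_sinh_mul_add_exp_neg_sub_one_le (p := p) ha, Real.exp_pos (-a)]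

lemma driftRate_nonneg (ha : 0 ≤ a) (hap : a / 2 ≤ 1 - 2 * p) : 0 ≤ driftRate a p :=
  mul_nonneg (by linarith) (Real.sinh_nonneg_iff.mpr ha)

lemma meanFactor_le_one_sub {κ u v : ℝ} (ha : 0 ≤ a) (hap : a / 2 ≤ 1 - 2 * p) (hκ : 0 ≤ κ)
    (hκv : κ ≤ v) (huv : u ≤ p * v) : meanFactor a u v ≤ 1 - κ * driftRate a p := by
  have hsinh : 0 ≤ 2 * Real.sinh a := mul_nonneg zero_le_two (Real.sinh_nonneg_iff.mpr ha)
  calc 1 + 2 * Real.sinh a * u + (Real.exp (-a) - 1) * v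
      ≤ 1 + 2 * Real.sinh a * (p * v) + (Real.exp (-a) - 1) * v := by
        linarith [mul_le_mul_of_nonneg_left huv hsinh]
    _ = 1 + v * (2 * Real.sinh a * p + (Real.exp (-a) - 1)) := by ring
    _ ≤ 1 + v * -driftRate a p := by
        linarith [mul_le_mul_of_nonneg_left (two_sinh_mul_add_exp_neg_sub_one_le (p := p) ha)
          (hκ.trans hκv)]
    _ ≤ 1 - κ * driftRate a p := by
        linarith [mul_le_mul_of_nonneg_right hκv (driftRate_nonneg ha hap)]

lemma meanFactor_le_one_add {K u v : ℝ} (ha : 0 ≤ a) (hv : 0 ≤ v) (huK : u ≤ K) :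
    meanFactor a u v ≤ 1 + 2 * Real.sinh a * K := by
  have hsinh : 0 ≤ 2 * Real.sinh a := mul_nonneg zero_le_two (Real.sinh_nonneg_iff.mpr ha)
  have hexp : Real.exp (-a) - 1 ≤ 0 := by simpa using ha
  rw [meanFactor]
  linarith [mul_le_mul_of_nonneg_left huK hsinh, mul_nonpos_of_nonpos_of_nonneg hexp hv]

end DriftRate

section Step

variable {a : ℝ} {x y : ℤ}

lemma outwardIndicator_le_moveIndicator (x y : ℤ) : outwardIndicator x y ≤ moveIndicator x y := by
  unfold outwardIndicator moveIndicator
  by_cases hyx : y = x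
  · simp [hyx]
  · rw [if_pos hyx]; split_ifs <;> norm_num

lemma norm_moveIndicator_le_one (x y : ℤ) : ‖moveIndicator x y‖ ≤ 1 := by
  unfold moveIndicator; split_ifs <;> simp

lemma norm_outwardIndicator_le_one (x y : ℤ) : ‖outwardIndicator x y‖ ≤ 1 := by
  unfold outwardIndicator; split_ifs <;> simp

lemma expAbs_pos (a : ℝ) (k : ℤ) : 0 < expAbs a k := Real.exp_pos _

lemma expAbs_eq_mul_meanFactor (a : ℝ) (h : |y - x| ≤ 1) :
    expAbs a y = expAbs a x * meanFactor a (outwardIndicator x y) (moveIndicator x y) := by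
  simp only [expAbs, meanFactor, outwardIndicator, moveIndicator]
  by_cases hyx : y = x
  · simp [hyx]
  by_cases hout : |y| = |x| + 1
  · have hfactor : 1 + 2 * Real.sinh a * 1 + (Real.exp (-a) - 1) * 1 = Real.exp a := by
      rw [Real.sinh_eq]; ring
    rw [if_pos hout, if_pos hyx, hfactor, hout, ← Real.exp_add]
    push_cast
    ring_nf
  · have hin : |y| = |x| - 1 := by grind
    have hfactor : 1 + 2 * Real.sinh a * 0 + (Real.exp (-a) - 1) * 1 = Real.exp (-a) := by ring
    rw [if_neg hout, if_pos hyx, hfactor, hin, ← Real.exp_add]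
    push_cast
    ring_nf

lemma expAbs_le_exp_mul_expAbs (ha : 0 ≤ a) (h : |y - x| ≤ 1) :
    expAbs a y ≤ Real.exp a * expAbs a x := by
  have hyx : |y| ≤ |x| + 1 := by linarith [abs_sub_abs_le_abs_sub y x]
  have hyx' : ((|y| : ℤ) : ℝ) ≤ ((|x| : ℤ) : ℝ) + 1 := mod_cast hyx
  rw [expAbs, expAbs, ← Real.exp_add, Real.exp_le_exp]
  linarith [mul_le_mul_of_nonneg_left hyx' ha]

end Step

section ConditionalExpectation

variable {Ω : Type*} {m m0 : MeasurableSpace Ω} {μ : Measure Ω}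

lemma lintegral_ofReal_le_ofReal_iff {f : Ω → ℝ} (hf : AEStronglyMeasurable f μ) (hf0 : 0 ≤ᵐ[μ] f)
    {C : ℝ} (hC : 0 ≤ C) :
    ∫⁻ ω, ENNReal.ofReal (f ω) ∂μ ≤ ENNReal.ofReal C ↔ Integrable f μ ∧ ∫ ω, f ω ∂μ ≤ C := by
  constructor
  · intro h
    have hint : Integrable f μ :=
      ⟨hf, (hasFiniteIntegral_iff_ofReal hf0).mpr (h.trans_lt ENNReal.ofReal_lt_top)⟩
    rw [← ofReal_integral_eq_lintegral_ofReal hint hf0, ENNReal.ofReal_le_ofReal_iff hC] at h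
    exact ⟨hint, h⟩
  · rintro ⟨hint, h⟩
    rw [← ofReal_integral_eq_lintegral_ofReal hint hf0]
    exact ENNReal.ofReal_le_ofReal h

lemma le_of_le_condExp [IsProbabilityMeasure μ] (hm : m ≤ m0) {f : Ω → ℝ} {b c : ℝ}
    (hf : Integrable f μ) (hfb : ∀ᵐ ω ∂μ, f ω ≤ b) (hc : ∀ᵐ ω ∂μ, c ≤ (μ[f | m]) ω) : c ≤ b :=
  calc c = ∫ _, c ∂μ := by simp
    _ ≤ ∫ ω, (μ[f | m]) ω ∂μ := integral_mono_ae (integrable_const c) integrable_condExp hc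
    _ = ∫ ω, f ω ∂μ := integral_condExp hm
    _ ≤ ∫ _, b ∂μ := integral_mono_ae hf (integrable_const b) hfb
    _ = b := by simp

lemma integral_le_of_condExp_le_affine [IsProbabilityMeasure μ] (hm : m ≤ m0) {X Y : Ω → ℝ}
    {r b : ℝ} (hX : Integrable X μ) (h : ∀ᵐ ω ∂μ, (μ[Y | m]) ω ≤ r * X ω + b) :
    ∫ ω, Y ω ∂μ ≤ r * ∫ ω, X ω ∂μ + b :=
  calc ∫ ω, Y ω ∂μ = ∫ ω, (μ[Y | m]) ω ∂μ := (integral_condExp hm).symm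
    _ ≤ ∫ ω, (r * X ω + b) ∂μ :=
        integral_mono_ae integrable_condExp ((hX.const_mul r).add (integrable_const b)) h
    _ = r * ∫ ω, X ω ∂μ + b := by
        rw [integral_add (hX.const_mul r) (integrable_const b), integral_const_mul]; simp

variable [IsFiniteMeasure μ] {x y : Ω → ℤ}

lemma integrable_moveIndicator (hx : Measurable x) (hy : Measurable y) :
    Integrable (fun ω => moveIndicator (x ω) (y ω)) μ :=
  .of_bound ((Measurable.of_discrete (f := fun k : ℤ × ℤ => moveIndicator k.1 k.2)).comp
    (hx.prodMk hy)).aestronglyMeasurable 1 (.of_forall fun _ => norm_moveIndicator_le_one _ _)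

lemma integrable_outwardIndicator (hx : Measurable x) (hy : Measurable y) :
    Integrable (fun ω => outwardIndicator (x ω) (y ω)) μ :=
  .of_bound ((Measurable.of_discrete (f := fun k : ℤ × ℤ => outwardIndicator k.1 k.2)).comp
    (hx.prodMk hy)).aestronglyMeasurable 1 (.of_forall fun _ => norm_outwardIndicator_le_one _ _)

lemma condExp_meanFactor (hm : m ≤ m0) (a : ℝ) {U V : Ω → ℝ} (hU : Integrable U μ)
    (hV : Integrable V μ) :
    μ[fun ω => meanFactor a (U ω) (V ω) | m] =ᵐ[μ]
      fun ω => meanFactor a ((μ[U | m]) ω) ((μ[V | m]) ω) := by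
  have hU' : Integrable ((2 * Real.sinh a) • U) μ := hU.smul _
  have hV' : Integrable ((Real.exp (-a) - 1) • V) μ := hV.smul _
  have h1 : Integrable (fun _ : Ω => (1 : ℝ)) μ := integrable_const 1
  change μ[(fun _ => (1 : ℝ)) + (2 * Real.sinh a) • U + (Real.exp (-a) - 1) • V | m] =ᵐ[μ] _
  filter_upwards [condExp_add (h1.add hU') hV' m, condExp_add h1 hU' m,
    condExp_smul (μ := μ) (2 * Real.sinh a) U m, condExp_smul (μ := μ) (Real.exp (-a) - 1) V m]
    with ω hsum hsum' hsmulU hsmulV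
  rw [hsum, Pi.add_apply, hsum', Pi.add_apply, hsmulU, hsmulV, condExp_const hm]
  rfl

lemma integrable_meanFactor (a : ℝ) {U V : Ω → ℝ} (hU : Integrable U μ) (hV : Integrable V μ) :
    Integrable (fun ω => meanFactor a (U ω) (V ω)) μ :=
  ((integrable_const 1).add (hU.const_mul _)).add (hV.const_mul _)

end ConditionalExpectation

section BiasedStep

variable {Ω : Type*} {m m0 : MeasurableSpace Ω} {μ : Measure Ω} {x y : Ω → ℤ} {a κ K p : ℝ}

lemma measurable_expAbs_comp (a : ℝ) (hx : Measurable[m] x) :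
    Measurable[m] fun ω => expAbs a (x ω) :=
  (Measurable.of_discrete (f := expAbs a)).comp hx

lemma integrable_expAbs_of_abs_sub_le_one (ha : 0 ≤ a) (hy : Measurable y)
    (hstep : ∀ᵐ ω ∂μ, |y ω - x ω| ≤ 1) (hX : Integrable (fun ω => expAbs a (x ω)) μ) :
    Integrable (fun ω => expAbs a (y ω)) μ := by
  refine (hX.const_mul (Real.exp a)).mono' (measurable_expAbs_comp a hy).aestronglyMeasurable ?_
  filter_upwards [hstep] with ω hω
  rw [Real.norm_of_nonneg (expAbs_pos a _).le]
  exact expAbs_le_exp_mul_expAbs ha hω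

lemma condExp_expAbs_eq_mul_meanFactor [IsFiniteMeasure μ] (hm : m ≤ m0) (ha : 0 ≤ a)
    (hx : Measurable[m] x) (hy : Measurable y) (hstep : ∀ᵐ ω ∂μ, |y ω - x ω| ≤ 1)
    (hX : Integrable (fun ω => expAbs a (x ω)) μ) :
    μ[fun ω => expAbs a (y ω) | m] =ᵐ[μ] fun ω => expAbs a (x ω) *
      meanFactor a ((μ[fun ω' => outwardIndicator (x ω') (y ω') | m]) ω)
        ((μ[fun ω' => moveIndicator (x ω') (y ω') | m]) ω) := by
  have hx0 : Measurable x := hx.mono hm le_rfl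
  have hU := integrable_outwardIndicator (μ := μ) hx0 hy
  have hV := integrable_moveIndicator (μ := μ) hx0 hy
  have hfactor : (fun ω => expAbs a (y ω)) =ᵐ[μ] (fun ω => expAbs a (x ω)) *
      fun ω => meanFactor a (outwardIndicator (x ω) (y ω)) (moveIndicator (x ω) (y ω)) :=
    hstep.mono fun _ hω => expAbs_eq_mul_meanFactor a hω
  have hprod := (integrable_expAbs_of_abs_sub_le_one ha hy hstep hX).congr hfactor
  have hpull := condExp_mul_of_stronglyMeasurable_left
    (measurable_expAbs_comp a hx).stronglyMeasurable hprod (integrable_meanFactor a hU hV)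
  filter_upwards [condExp_congr_ae hfactor, hpull, condExp_meanFactor hm a hU hV]
    with ω hcongr hω hmean
  rw [hcongr, hω, Pi.mul_apply, hmean]

namespace IsInwardBiasedStep

lemma le_one [IsProbabilityMeasure μ] (h : IsInwardBiasedStep μ m κ K p x y) (hm : m ≤ m0)
    (hx : Measurable x) (hy : Measurable y) : κ ≤ 1 :=
  le_of_le_condExp hm (integrable_moveIndicator hx hy)
    (.of_forall fun _ => (le_abs_self _).trans (norm_moveIndicator_le_one _ _))
    (h.condExp_move_mem.mono fun _ hω => hω.1)

lemma condExp_expAbs_le [IsFiniteMeasure μ] (h : IsInwardBiasedStep μ m κ K p x y) (hm : m ≤ m0)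
    (hx : Measurable[m] x) (hy : Measurable y) (ha : 0 ≤ a) (hap : a / 2 ≤ 1 - 2 * p)
    (hκ : 0 ≤ κ) (hX : Integrable (fun ω => expAbs a (x ω)) μ) :
    ∀ᵐ ω ∂μ, (μ[fun ω' => expAbs a (y ω') | m]) ω ≤
      (1 - κ * driftRate a p) * expAbs a (x ω) + (κ * driftRate a p + 2 * Real.sinh a * K) := by
  have hx0 : Measurable x := hx.mono hm le_rfl
  have hindicator := condExp_mono (m := m) (μ := μ) (integrable_outwardIndicator hx0 hy)
    (integrable_moveIndicator hx0 hy)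
    (.of_forall fun ω => outwardIndicator_le_moveIndicator (x ω) (y ω))
  filter_upwards [condExp_expAbs_eq_mul_meanFactor hm ha hx hy h.abs_sub_le_one hX,
    h.condExp_move_mem, h.condExp_outward_le, hindicator] with ω hω ⟨hκv, hvK⟩ hout huv
  rw [hω]
  by_cases horigin : x ω = 0
  · have hone : expAbs a (x ω) = 1 := by simp [expAbs, horigin]
    rw [hone]
    linarith [meanFactor_le_one_add ha (hκ.trans hκv) (huv.trans hvK)]
  · have hδ : 0 ≤ κ * driftRate a p := mul_nonneg hκ (driftRate_nonneg ha hap)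
    have hK : 0 ≤ 2 * Real.sinh a * K :=
      mul_nonneg (mul_nonneg zero_le_two (Real.sinh_nonneg_iff.mpr ha)) (hκ.trans (hκv.trans hvK))
    linarith [mul_le_mul_of_nonneg_left (meanFactor_le_one_sub ha hap hκ hκv (hout horigin))
      (expAbs_pos a (x ω)).le]

lemma integral_expAbs_le [IsProbabilityMeasure μ] (h : IsInwardBiasedStep μ m κ K p x y)
    (hm : m ≤ m0) (hx : Measurable[m] x) (hy : Measurable y) (ha : 0 ≤ a)
    (hap : a / 2 < 1 - 2 * p) (hκ : 0 < κ) (hp : 0 ≤ p) {M : ℝ}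
    (hM : 1 + 2 * K / (κ * (1 - 2 * p - a / 2)) ≤ M)
    (hX : Integrable (fun ω => expAbs a (x ω)) μ) (hXM : ∫ ω, expAbs a (x ω) ∂μ ≤ M) :
    ∫ ω, expAbs a (y ω) ∂μ ≤ M := by
  have hcontract : 0 ≤ 1 - κ * driftRate a p := sub_nonneg.mpr <|
    mul_le_one₀ (h.le_one hm (hx.mono hm le_rfl) hy) (driftRate_nonneg ha hap.le)
      (driftRate_le_one ha hp)
  have hfixed : 2 * Real.sinh a * K ≤ κ * driftRate a p * (M - 1) := by
    have hden : 0 < κ * (1 - 2 * p - a / 2) := mul_pos hκ (sub_pos.mpr hap)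
    have hK : 2 * K ≤ (M - 1) * (κ * (1 - 2 * p - a / 2)) :=
      (div_le_iff₀ hden).mp (le_sub_iff_add_le'.mpr hM)
    rw [driftRate]
    linarith [mul_le_mul_of_nonneg_right hK (Real.sinh_nonneg_iff.mpr ha)]
  calc ∫ ω, expAbs a (y ω) ∂μ
      ≤ (1 - κ * driftRate a p) * ∫ ω, expAbs a (x ω) ∂μ +
          (κ * driftRate a p + 2 * Real.sinh a * K) :=
        integral_le_of_condExp_le_affine hm hX (h.condExp_expAbs_le hm hx hy ha hap.le hκ.le hX)
    _ ≤ (1 - κ * driftRate a p) * M + (κ * driftRate a p + 2 * Real.sinh a * K) := by gcongr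
    _ ≤ M := by linarith

end IsInwardBiasedStep

end BiasedStep

theorem stmt_14_general {Ω : Type*} {m0 : MeasurableSpace Ω} (μ : Measure Ω)
    [IsProbabilityMeasure μ] (ℱ : Filtration ℕ m0) {a p κ K M : ℝ} (ha : 0 ≤ a) (hp : 0 ≤ p)
    (hap : a / 2 < 1 - 2 * p) (hκ : 0 < κ) (hM : 1 + 2 * K / (κ * (1 - 2 * p - a / 2)) ≤ M)
    {s : ℕ} {D : ℕ → Ω → ℤ} (hadapt : ∀ n, Measurable[ℱ n] (D n))
    (hbias : ∀ n, s ≤ n → IsInwardBiasedStep μ (ℱ n) κ K p (D n) (D (n + 1)))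
    (hinit : ∫⁻ ω, ENNReal.ofReal (expAbs a (D s ω)) ∂μ ≤ ENNReal.ofReal M) :
    ∀ n, s ≤ n → ∫⁻ ω, ENNReal.ofReal (expAbs a (D n ω)) ∂μ ≤ ENNReal.ofReal M := by
  have hD n : Measurable (D n) := (hadapt n).mono (ℱ.le n) le_rfl
  have hM0 : 0 ≤ M := by
    obtain ⟨ω, hκv, hvK⟩ := (hbias s le_rfl).condExp_move_mem.exists
    have hden : 0 < κ * (1 - 2 * p - a / 2) := mul_pos hκ (sub_pos.mpr hap)
    have hK : 0 ≤ K := hκ.le.trans (hκv.trans hvK)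
    exact (add_nonneg zero_le_one (div_nonneg (mul_nonneg zero_le_two hK) hden.le)).trans hM
  have hiff n := lintegral_ofReal_le_ofReal_iff (μ := μ)
    (measurable_expAbs_comp a (hD n)).aestronglyMeasurable
    (.of_forall fun ω => (expAbs_pos a (D n ω)).le) hM0
  intro n hn
  induction n, hn using Nat.le_induction with
  | base => exact hinit
  | succ n hn ih =>
    obtain ⟨hint, hle⟩ := (hiff n).mp ih
    have hstep := hbias n hn
    exact (hiff (n + 1)).mpr
      ⟨integrable_expAbs_of_abs_sub_le_one ha (hD (n + 1)) hstep.abs_sub_le_one hint,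
        hstep.integral_expAbs_le (ℱ.le n) (hadapt n) (hD (n + 1)) ha hap hκ hp hM hint hle⟩

/-- exponential moment bound for a θ-balancing difference process. -/
theorem stmt_14 {Ω : Type*} {m0 : MeasurableSpace Ω} (μ : Measure Ω) [IsProbabilityMeasure μ]
    (ℱ : Filtration ℕ m0) (θ κ : ℝ) (hθ0 : 0 < θ) (hθ1 : θ < 1)
    (hκ0 : 0 < κ) (hκ1 : κ ≤ 1/3) (s : ℕ)
    (D : ℕ → Ω → ℤ)
    (hadapt : ∀ n, Measurable[ℱ n] (D n))
    (hstep : ∀ n, s ≤ n → ∀ᵐ ω ∂μ, |D (n+1) ω - D n ω| ≤ 1)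
    (hmove : ∀ n, s ≤ n → ∀ᵐ ω ∂μ,
      κ ≤ (μ[(fun ω' => if D (n+1) ω' ≠ D n ω' then (1:ℝ) else 0) | ℱ n]) ω ∧
      (μ[(fun ω' => if D (n+1) ω' ≠ D n ω' then (1:ℝ) else 0) | ℱ n]) ω ≤ 3 * κ)
    (hbal : ∀ n, s ≤ n → ∀ᵐ ω ∂μ, D n ω ≠ 0 →
      (μ[(fun ω' => if |D (n+1) ω'| = |D n ω'| + 1 then (1:ℝ) else 0) | ℱ n]) ω ≤
        (1/2 - θ/6) * (μ[(fun ω' => if D (n+1) ω' ≠ D n ω' then (1:ℝ) else 0) | ℱ n]) ω)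
    (hinit : ∫⁻ ω, ENNReal.ofReal (Real.exp (θ * ((|D s ω| : ℤ) : ℝ) / 2)) ∂μ ≤
      ENNReal.ofReal (150 / θ^2)) :
    ∀ n, s ≤ n → ∫⁻ ω, ENNReal.ofReal (Real.exp (θ * ((|D n ω| : ℤ) : ℝ) / 2)) ∂μ ≤
      ENNReal.ofReal (150 / θ^2) := by
  have hfixed : 1 + 2 * (3 * κ) / (κ * (1 - 2 * (1 / 2 - θ / 6) - θ / 2 / 2)) = 1 + 72 / θ := by
    rw [show 1 - 2 * (1 / 2 - θ / 6) - θ / 2 / 2 = θ / 12 by ring]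
    field_simp
    ring
  have hbound : 1 + 72 / θ ≤ 150 / θ ^ 2 := by
    rw [le_div_iff₀ (by positivity)]
    field_simp
    nlinarith
  simp only [mul_div_right_comm] at hinit ⊢
  exact stmt_14_general μ ℱ (by linarith) (by linarith) (by linarith) hκ0
    (hfixed.trans_le hbound) hadapt (fun n hn => ⟨hstep n hn, hmove n hn, hbal n hn⟩) hinit
end
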